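/- The binary hierarchical model semigroup of the complete graph K₄ (simplicial complex [12][13][14][23][24][34], all dᵢ = 2) has exactly one hole: the vector 𝟏 whose every pair-marginal coordinate equals 1 lies in the normalization ℤℬ ∩ ℝ≥0ℬ of ℕℬ_{K₄,(2,2,2,2)} but not in ℕℬ_{K₄,(2,2,2,2)}, and every other element of the normalization lies in the semigroup. -/

import Mathlib

namespace Stmt19

/-- Row index of the binary `K₄` design matrix: an edge `{a,b}`, `a < b`, of the
complete graph on four vertices together with a pair of binary states. -/
abbrev K4Row := {e : Fin 4 × Fin 4 // e.1 < e.2} × Fin 2 × Fin 2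

/-- The 24×16 design matrix of the binary hierarchical model on `K₄`: the column
indexed by `x : Fin 4 → Fin 2` is the direct sum of the unit vectors `e_{x_a x_b}`
over the six edges of `K₄`. -/
def K4Mat : Matrix K4Row (Fin 4 → Fin 2) ℤ :=
  Matrix.of fun k x =>
    if x k.1.1.1 = k.2.1 ∧ x k.1.1.2 = k.2.2 then 1 else 0

/-- The affine semigroup `ℕℬ_{K₄,(2,2,2,2)}`. -/
def Nspan : Set (K4Row → ℤ) :=
  {y | ∃ w : (Fin 4 → Fin 2) → ℤ, 0 ≤ w ∧ y = K4Mat.mulVec w}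

/-- The lattice `ℤℬ_{K₄,(2,2,2,2)}`. -/
def Zspan : Set (K4Row → ℤ) :=
  {y | ∃ w : (Fin 4 → Fin 2) → ℤ, y = K4Mat.mulVec w}

/-- Membership in the cone `ℝ≥0 ℬ_{K₄,(2,2,2,2)}` (rational coefficients suffice
for integer points of a rational cone). -/
def inCone (y : K4Row → ℤ) : Prop :=
  ∃ a : (Fin 4 → Fin 2) → ℚ, (∀ x, 0 ≤ a x) ∧
    ∀ k, (y k : ℚ) = ∑ x : Fin 4 → Fin 2, a x * (K4Mat k x : ℚ)


abbrev Cube := Fin 4 → Fin 2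

def sg (x : Cube) : ℤ := if (x 0 + x 1 + x 2 + x 3) = 0 then 1 else -1

def vv (x : Cube) : Fin 5 → ℤ :=
  ![1, ((x 0).val : ℤ), ((x 1).val : ℤ), ((x 2).val : ℤ), ((x 3).val : ℤ)]

lemma sum_cube {M : Type*} [AddCommMonoid M] (f : Cube → M) :
    ∑ x : Cube, f x = ∑ a : Fin 2, ∑ b : Fin 2, ∑ c : Fin 2, ∑ d : Fin 2, f ![a, b, c, d] := by
  let e : Fin 2 × Fin 2 × Fin 2 × Fin 2 ≃ Cube :=
    { toFun := fun p => ![p.1, p.2.1, p.2.2.1, p.2.2.2]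
      invFun := fun x => (x 0, x 1, x 2, x 3)
      left_inv := fun p => rfl
      right_inv := fun x => by ext i; fin_cases i <;> rfl }
  rw [← Equiv.sum_comp e f]
  simp only [Fintype.sum_prod_type]
  rfl

lemma cube_cases {P : Cube → Prop} (h : ∀ a b c d, P ![a, b, c, d]) (x : Cube) : P x := by
  have : x = ![x 0, x 1, x 2, x 3] := by ext i; fin_cases i <;> rfl
  rw [this]; exact h _ _ _ _

lemma ker_lemma (u : Cube → ℚ) (hu : ∀ k, ∑ x : Cube, u x * (K4Mat k x : ℚ) = 0) :
    ∃ c : Fin 5 → ℚ, ∀ x, u x = sg x * ∑ j, (vv x j : ℚ) * c j := by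
  have H : ∀ (a b : Fin 4) (h : a < b) (i j : Fin 2), ∑ x : Cube, u x *
      (if x a = i ∧ x b = j then (1:ℚ) else 0) = 0 := by
    intro a b h i j
    have := hu (⟨(a, b), h⟩, i, j)
    simpa [K4Mat] using this
  simp only [sum_cube] at H
  have h01 := H 0 1 (by decide)
  have h02 := H 0 2 (by decide)
  have h03 := H 0 3 (by decide)
  have h12 := H 1 2 (by decide)
  have h13 := H 1 3 (by decide)
  have h23 := H 2 3 (by decide)
  clear H hu
  simp [Fin.sum_univ_two, Fin.forall_fin_two] at h01 h02 h03 h12 h13 h23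
  refine ⟨![u ![0,0,0,0], -u ![1,0,0,0] - u ![0,0,0,0], -u ![0,1,0,0] - u ![0,0,0,0],
    -u ![0,0,1,0] - u ![0,0,0,0], -u ![0,0,0,1] - u ![0,0,0,0]], ?_⟩
  refine cube_cases ?_
  obtain ⟨⟨_, _⟩, _, _⟩ := h01
  obtain ⟨⟨_, _⟩, _, _⟩ := h02
  obtain ⟨⟨_, _⟩, _, _⟩ := h03
  obtain ⟨⟨_, _⟩, _, _⟩ := h12
  obtain ⟨⟨_, _⟩, _, _⟩ := h13
  obtain ⟨⟨_, _⟩, _, _⟩ := h23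
  simp [Fin.forall_fin_two, sg, vv, Fin.sum_univ_succ]
  repeat' apply And.intro
  all_goals linarith

lemma ker_conv : ∀ k j, ∑ x : Cube, K4Mat k x * (sg x * vv x j) = 0 := by
  decide +kernel

lemma one_add (s : Cube) : ∀ k, ∑ x : Cube, K4Mat k x *
    (if (Finset.univ.filter fun i => x i ≠ s i).card = 1 ∨
      (Finset.univ.filter fun i => x i ≠ s i).card = 4 then 1 else 0) = 1 + K4Mat k s := by
  revert s
  decide +kernel

lemma two_sub (s : Cube) : ∀ k, ∑ x : Cube, K4Mat k x *
    (if sg x = sg s ∧ x ≠ s then 1 else 0) = 2 - K4Mat k s := by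
  revert s
  decide +kernel

lemma one_not : ((fun _ => (1 : ℤ)) : K4Row → ℤ) ∉ Nspan := by
  rintro ⟨w, hw, hy⟩
  have H : ∀ (a b : Fin 4) (h : a < b) (i j : Fin 2), 1 = ∑ x : Cube, 
      (if x a = i ∧ x b = j then w x else 0) := by
    intro a b h i j
    have := congrFun hy (⟨(a, b), h⟩, i, j)
    simpa [K4Mat, Matrix.mulVec, dotProduct] using this
  simp only [sum_cube] at H
  have h01 := H 0 1 (by decide)
  have h02 := H 0 2 (by decide)
  have h03 := H 0 3 (by decide)
  have h12 := H 1 2 (by decide)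
  have h13 := H 1 3 (by decide)
  have h23 := H 2 3 (by decide)
  clear H hy
  have p : ∀ a b c d, 0 ≤ w ![a,b,c,d] := fun a b c d => hw _
  simp [Fin.sum_univ_two, Fin.forall_fin_two] at h01 h02 h03 h12 h13 h23 p
  have e1 : w ![1,1,1,1] = 0 ∨ 1 ≤ w ![1,1,1,1] := by omega
  have e2 : w ![0,1,1,1] = 0 ∨ 1 ≤ w ![0,1,1,1] := by omega
  have e3 : w ![1,0,1,1] = 0 ∨ 1 ≤ w ![1,0,1,1] := by omega
  rcases e1 with e1 | e1 <;> rcases e2 with e2 | e2 <;> rcases e3 with e3 | e3 <;> omega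

lemma finish (y : K4Row → ℤ) (n : Cube → ℤ) (hn : ∀ x, 0 ≤ n x)
    (hy : ∀ k, y k = ∑ x, K4Mat k x * n x + 1) (hN : y ∉ Nspan) : y = fun _ => 1 := by
  by_cases h : ∃ s, n s ≠ 0
  · obtain ⟨s, hs⟩ := h
    exfalso
    apply hN
    refine ⟨fun x => (n x - if x = s then 1 else 0) + (if (Finset.univ.filter fun i => x i ≠ s i).card = 1 ∨
      (Finset.univ.filter fun i => x i ≠ s i).card = 4 then 1 else 0), ?_, ?_⟩
    · intro x
      have := hn x
      simp only [Pi.zero_apply]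
      apply add_nonneg
      · split_ifs with hx
        · subst hx; omega
        · omega
      · split_ifs <;> simp
    · funext k
      simp only [Matrix.mulVec, dotProduct, mul_add, mul_sub, Finset.sum_add_distrib,
        Finset.sum_sub_distrib, one_add s k, hy k]
      simp
  · push Not at h
    funext k
    simp [hy k, h]


def ev (x : Cube) (c : Fin 5 → ℚ) : ℚ := ∑ j, (vv x j : ℚ) * c j

lemma ev_add (x : Cube) (c h : Fin 5 → ℚ) (t : ℚ) : ev x (c + t • h) = ev x c + t * ev x h := by
  simp only [ev, Finset.mul_sum, ← Finset.sum_add_distrib]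
  refine Finset.sum_congr rfl fun j _ => ?_
  simp; ring

lemma ev_inj (h : Fin 5 → ℚ) (hh : ∀ x, ev x h = 0) : h = 0 := by
  have h0 := hh ![0,0,0,0]
  have h1 := hh ![1,0,0,0]
  have h2 := hh ![0,1,0,0]
  have h3 := hh ![0,0,1,0]
  have h4 := hh ![0,0,0,1]
  simp [ev, vv, Fin.sum_univ_succ] at h0 h1 h2 h3 h4
  funext j
  fin_cases j <;> simp <;> linarith

lemma sg_ne (x : Cube) : sg x ≠ 0 := by unfold sg; split_ifs <;> simp

/-- A vertex of the fibre polytope. -/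
lemma vertex (w : Cube → ℤ) (c₀ : Fin 5 → ℚ) (h₀ : ∀ x, 0 ≤ (w x : ℚ) + sg x * ev x c₀) :
    ∃ c : Fin 5 → ℚ, (∀ x, 0 ≤ (w x : ℚ) + sg x * ev x c) ∧
      ∀ h : Fin 5 → ℚ, (∀ x, (w x : ℚ) + sg x * ev x c = 0 → ev x h = 0) → h = 0 := by
  classical
  let nz : (Fin 5 → ℚ) → ℕ := fun c =>
    (Finset.univ.filter fun x : Cube => (w x : ℚ) + sg x * ev x c ≠ 0).card
  let S : Set (Fin 5 → ℚ) := {c | ∀ x, 0 ≤ (w x : ℚ) + sg x * ev x c}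
  obtain ⟨c, hc, hmin⟩ : ∃ c ∈ S, ∀ d ∈ S, nz c ≤ nz d := by
    have hwf := (measure nz).wf.has_min S ⟨c₀, h₀⟩
    obtain ⟨c, hc, hm⟩ := hwf
    exact ⟨c, hc, fun d hd => not_lt.mp (hm d hd)⟩
  refine ⟨c, hc, ?_⟩
  by_contra! hcon
  obtain ⟨h₁, hz₁, hne₁⟩ := hcon
  -- choose the sign
  obtain ⟨h, hz, x₀, hx₀⟩ : ∃ h : Fin 5 → ℚ,
      (∀ x, (w x : ℚ) + sg x * ev x c = 0 → ev x h = 0) ∧ ∃ x, (sg x : ℚ) * ev x h < 0 := by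
    obtain ⟨x, hx⟩ : ∃ x, ev x h₁ ≠ 0 := by
      by_contra! hall
      exact hne₁ (ev_inj _ hall)
    have hsx : (sg x : ℚ) * ev x h₁ ≠ 0 := mul_ne_zero (by exact_mod_cast sg_ne x) hx
    have hneg : ∀ x, ev x (-h₁) = - ev x h₁ := by
      intro x; simp [ev]
    rcases lt_or_gt_of_ne hsx with hl | hg
    · exact ⟨h₁, hz₁, x, hl⟩
    · refine ⟨-h₁, fun x' hx' => ?_, x, ?_⟩
      · rw [hneg, hz₁ x' hx', neg_zero]
      · rw [hneg]; linarith
  let F := Finset.univ.filter fun x : Cube => (sg x : ℚ) * ev x h < 0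
  have hF : F.Nonempty := ⟨x₀, by simp [F, hx₀]⟩
  obtain ⟨x₁, hx₁, hx₁m⟩ := Finset.exists_min_image F
    (fun x => ((w x : ℚ) + sg x * ev x c) / (-(sg x * ev x h))) hF
  have hneg₁ : (sg x₁ : ℚ) * ev x₁ h < 0 := by simpa [F] using hx₁
  set t : ℚ := ((w x₁ : ℚ) + sg x₁ * ev x₁ c) / (-(sg x₁ * ev x₁ h)) with ht
  have ht0 : 0 ≤ t := div_nonneg (hc x₁) (by linarith)
  have key : ∀ x, (w x : ℚ) + sg x * ev x (c + t • h) =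
      ((w x : ℚ) + sg x * ev x c) + t * (sg x * ev x h) := by
    intro x; rw [ev_add]; ring
  have hd : (c + t • h) ∈ S := by
    intro x
    rw [key]
    by_cases hx : (sg x : ℚ) * ev x h < 0
    · have := hx₁m x (by simp [F, hx])
      rw [le_div_iff₀ (by linarith)] at this
      linarith
    · have := hc x
      have := mul_nonneg ht0 (not_lt.mp hx)
      linarith
  have hlt : nz (c + t • h) < nz c := by
    apply Finset.card_lt_card
    rw [Finset.ssubset_iff_of_subset]
    · refine ⟨x₁, ?_, ?_⟩
      · simp only [Finset.mem_filter, Finset.mem_univ, true_and]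
        intro h0
        rw [hz x₁ h0] at hneg₁
        simp at hneg₁
      · simp only [Finset.mem_filter, Finset.mem_univ, true_and, not_not]
        rw [key, ht]
        have : (sg x₁ : ℚ) * ev x₁ h ≠ 0 := hneg₁.ne
        generalize (sg x₁ : ℚ) * ev x₁ h = q at *
        field_simp
        ring
    · intro x
      simp only [Finset.mem_filter, Finset.mem_univ, true_and]
      intro h1 h2
      apply h1
      rw [key, h2, hz x h2]; simp
  exact absurd (hmin _ hd) (not_le.mpr hlt)

/-- the cofactor bound -/
def b2z (b : Bool) : ℤ := cond b 1 0
def d3 (a b c d e f g h i : ℤ) : ℤ := a * (e * i - f * h) - b * (d * i - f * g) + c * (d * h - e * g)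

lemma cof_bound : ∀ a b c d e f g h i j k l : Bool, 
    max 0 (d3 (b2z b) (b2z c) (b2z d) (b2z f) (b2z g) (b2z h) (b2z j) (b2z k) (b2z l)) +
    max 0 (-d3 (b2z a) (b2z c) (b2z d) (b2z e) (b2z g) (b2z h) (b2z i) (b2z k) (b2z l)) +
    max 0 (d3 (b2z a) (b2z b) (b2z d) (b2z e) (b2z f) (b2z h) (b2z i) (b2z j) (b2z l)) +
    max 0 (-d3 (b2z a) (b2z b) (b2z c) (b2z e) (b2z f) (b2z g) (b2z i) (b2z j) (b2z k)) ≤ 3 := by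
  decide +kernel

def hyps (D : ℕ) (r : Fin 5 → Fin D) : List (Fin 5 → ℤ) :=
  let s : Fin 5 → ℤ := fun j => if (r j).val = 2 then -1 else ((r j).val : ℤ)
  (if s 1 = 0 ∧ s 2 = 0 ∧ s 3 = 0 ∧ s 4 = 0 then [![0,1,0,0,0]] else
    [-4,-3,-2,-1,0,1,2,3,4].map fun t => ![t, s 1, s 2, s 3, s 4]) ++
  [![0,1,-1,0,0], ![0,1,0,-1,0], ![0,1,0,0,-1], ![0,0,1,-1,0], ![0,0,1,0,-1], ![0,0,0,1,-1],
   ![-1,1,1,0,0], ![-1,1,0,1,0], ![-1,1,0,0,1], ![-1,0,1,1,0], ![-1,0,1,0,1], ![-1,0,0,1,1]]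

def evz (x : Cube) (c : Fin 5 → ℤ) : ℤ :=
  c 0 + (x 0).val * c 1 + (x 1).val * c 2 + (x 2).val * c 3 + (x 3).val * c 4

lemma evz_eq (x : Cube) (c : Fin 5 → ℤ) : evz x c = ∑ j, vv x j * c j := by
  simp [evz, vv, Fin.sum_univ_succ]
  ring

def gg (D : ℕ) (r : Fin 5 → Fin D) (x : Cube) : ℤ := (sg x * evz x (fun j => ((r j).val : ℤ))) % D

def ClassOK (D : ℕ) (r : Fin 5 → Fin D) : Prop :=
    (∃ h ∈ hyps D r, h ≠ 0 ∧ ∀ x, gg D r x = 0 → evz x h = 0) ∨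
    (∀ k, ∑ x, K4Mat k x * gg D r x = 0) ∨
    (∀ k, ∑ x, K4Mat k x * gg D r x = D) ∨
    (∃ s, ∀ k, ∑ x, K4Mat k x * gg D r x = D * (2 - K4Mat k s))

instance (D : ℕ) (r : Fin 5 → Fin D) : Decidable (ClassOK D r) := by
  unfold ClassOK; infer_instance

lemma class1 : ∀ r, ClassOK 1 r := by decide +kernel
lemma class2 : ∀ r, ClassOK 2 r := by decide +kernel
lemma class3 : ∀ r, ClassOK 3 r := by decide +kernel

lemma detb_le (m : Fin 4 → Fin 4 → Bool) :
    (Matrix.of fun i j => b2z (m i j)).det ≤ 3 := by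
  have key := cof_bound (m 1 0) (m 1 1) (m 1 2) (m 1 3) (m 2 0) (m 2 1) (m 2 2) (m 2 3)
    (m 3 0) (m 3 1) (m 3 2) (m 3 3)
  have hexp : (Matrix.of fun i j => b2z (m i j)).det =
      b2z (m 0 0) * d3 (b2z (m 1 1)) (b2z (m 1 2)) (b2z (m 1 3)) (b2z (m 2 1)) (b2z (m 2 2))
        (b2z (m 2 3)) (b2z (m 3 1)) (b2z (m 3 2)) (b2z (m 3 3)) +
      b2z (m 0 1) * (-d3 (b2z (m 1 0)) (b2z (m 1 2)) (b2z (m 1 3)) (b2z (m 2 0)) (b2z (m 2 2))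
        (b2z (m 2 3)) (b2z (m 3 0)) (b2z (m 3 2)) (b2z (m 3 3))) +
      b2z (m 0 2) * d3 (b2z (m 1 0)) (b2z (m 1 1)) (b2z (m 1 3)) (b2z (m 2 0)) (b2z (m 2 1))
        (b2z (m 2 3)) (b2z (m 3 0)) (b2z (m 3 1)) (b2z (m 3 3)) +
      b2z (m 0 3) * (-d3 (b2z (m 1 0)) (b2z (m 1 1)) (b2z (m 1 2)) (b2z (m 2 0)) (b2z (m 2 1))
        (b2z (m 2 2)) (b2z (m 3 0)) (b2z (m 3 1)) (b2z (m 3 2))) := by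
    rw [Matrix.det_succ_row_zero]
    simp [Fin.sum_univ_succ, Matrix.det_fin_three, Matrix.submatrix, Fin.succAbove, d3]
    ring
  have hb : ∀ (b : Bool) (z : ℤ), b2z b * z ≤ max 0 z := by
    intro b z; cases b <;> simp [b2z]
  rw [hexp]
  refine le_trans ?_ key
  gcongr <;> exact hb _ _

lemma detb_abs (m : Fin 4 → Fin 4 → Bool) :
    |(Matrix.of fun i j => b2z (m i j)).det| ≤ 3 := by
  rw [abs_le]
  refine ⟨?_, detb_le m⟩
  have h := detb_le (fun i => m (Equiv.swap 0 1 i))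
  have h2 := Matrix.det_permute (Equiv.swap (0 : Fin 4) 1) (Matrix.of fun i j => b2z (m i j))
  rw [Equiv.Perm.sign_swap (by decide)] at h2
  have h3 : (Matrix.of fun i j => b2z (m i j)).submatrix (Equiv.swap (0 : Fin 4) 1) id
    = Matrix.of fun i j => b2z (m (Equiv.swap 0 1 i) j) := rfl
  rw [h3] at h2
  rw [h2] at h
  simp at h
  linarith

lemma det5 (p : Fin 5 → Fin 4 → ℤ) :
    (Matrix.of fun i => (Fin.cons 1 (p i) : Fin 5 → ℤ)).det =
      (Matrix.of fun i j : Fin 4 => p i.succ j - p 0 j).det := by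
  rw [Matrix.det_eq_of_forall_row_eq_smul_add_const
    (B := Matrix.of fun i => (Fin.cons (if i = 0 then 1 else 0)
      (fun j => if i = 0 then p 0 j else p i j - p 0 j) : Fin 5 → ℤ))
    (fun i => if i = 0 then 0 else 1) 0 (by simp)]
  · rw [Matrix.det_succ_column_zero, Fin.sum_univ_succ]
    simp only [Matrix.of_apply, Fin.cons_zero, Fin.succ_ne_zero, if_false, if_true]
    simp
    rfl
  · intro i j
    by_cases hi : i = 0
    · subst hi; refine Fin.cases ?_ (fun j => ?_) j <;> simp
    · refine Fin.cases ?_ (fun j => ?_) j <;> simp [hi]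

lemma det_bound (x : Fin 5 → Cube) : |(Matrix.of fun i => vv (x i)).det| ≤ 3 := by
  have h1 : (Matrix.of fun i => vv (x i)) =
      Matrix.of fun i => (Fin.cons 1 (fun j => ((x i j).val : ℤ)) : Fin 5 → ℤ) := by
    ext i j; fin_cases j <;> rfl
  have hd : ∀ a b : Fin 2, ((a.val : ℤ) - b.val) = (1 - 2 * (b.val : ℤ)) * b2z (decide (a ≠ b)) := by
    decide
  have hs : ∀ b : Fin 2, |(1 - 2 * (b.val : ℤ))| = 1 := by decide
  rw [h1, det5]
  simp only [hd]
  have := Matrix.det_mul_row (fun j => (1 - 2 * ((x 0 j).val : ℤ)))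
    (Matrix.of fun i j : Fin 4 => b2z (decide (x i.succ j ≠ x 0 j)))
  simp only [Matrix.of_apply] at this
  rw [this, abs_mul, Finset.abs_prod]
  simp only [hs, Finset.prod_const_one, one_mul]
  exact detb_abs _

lemma denom (Z : Set Cube) (hZ : ∀ h : Fin 5 → ℚ, (∀ x ∈ Z, ev x h = 0) → h = 0)
    (c : Fin 5 → ℚ) (hc : ∀ x ∈ Z, ∃ z : ℤ, ev x c = z) :
    ∃ D : ℕ, (D = 1 ∨ D = 2 ∨ D = 3) ∧ ∃ m : Fin 5 → ℤ, ∀ j, (D : ℚ) * c j = m j := by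
  let V : Cube → Fin 5 → ℚ := fun x j => (vv x j : ℚ)
  have hspan : Submodule.span ℚ (V '' Z) = ⊤ := by
    by_contra hne
    obtain ⟨f, hf0, hf⟩ := Submodule.exists_le_ker_of_lt_top _ (lt_top_iff_ne_top.mpr hne)
    apply hf0
    have hfe : ∀ v : Fin 5 → ℚ, f v = ∑ j, v j * f (Pi.single j 1) := by
      intro v
      conv_lhs => rw [pi_eq_sum_univ' v]
      simp [map_sum]
    have := hZ (fun j => f (Pi.single j 1)) (fun x hx => by
      have h1 : f (V x) = 0 := hf (Submodule.subset_span ⟨x, hx, rfl⟩)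
      rw [hfe] at h1
      exact h1)
    ext j
    simpa using congrFun this j
  have hex := Submodule.exists_fun_fin_finrank_span_eq ℚ (V '' Z)
  have hfr : Module.finrank ℚ (Submodule.span ℚ (V '' Z)) = 5 := by
    rw [hspan]; simp
  rw [hfr] at hex
  obtain ⟨f, hfs, -, hli⟩ := hex
  choose x hxZ hxf using hfs
  choose z hz using fun i => hc (x i) (hxZ i)
  let A : Matrix (Fin 5) (Fin 5) ℤ := Matrix.of fun i => vv (x i)
  have hA : A.map (Int.cast : ℤ → ℚ) = Matrix.of f := by
    ext i j
    rw [← funext hxf]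
    rfl
  have hdet : A.det ≠ 0 := by
    intro h0
    have h1 : (A.map (Int.cast : ℤ → ℚ)).det = 0 := by
      have := Int.cast_det (R := ℚ) A
      rw [← this, h0]; simp
    have h2 : IsUnit (A.map (Int.cast : ℤ → ℚ)) := by
      rw [← Matrix.linearIndependent_rows_iff_isUnit, hA]
      exact hli
    rw [Matrix.isUnit_iff_isUnit_det, h1] at h2
    simp at h2
  have hb : |A.det| ≤ 3 := det_bound x
  have hAc : (A.map (Int.cast : ℤ → ℚ)).mulVec c = fun i => (z i : ℚ) := by
    funext i
    rw [← hz i]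
    rfl
  have hcr : ∀ j, (A.det : ℚ) * c j = ((A.adjugate.mulVec z) j : ℤ) := by
    intro j
    have h1 := congrArg (fun v => (A.map (Int.cast : ℤ → ℚ)).adjugate.mulVec v) hAc
    simp only [Matrix.mulVec_mulVec, Matrix.adjugate_mul] at h1
    have h2 := congrFun h1 j
    have h3 : (A.map (Int.cast : ℤ → ℚ)).adjugate = A.adjugate.map (Int.cast : ℤ → ℚ) :=
      ((Int.castRingHom ℚ).map_adjugate A).symm
    rw [h3, ← Int.cast_det (R := ℚ) A] at h2
    simp only [Matrix.smul_mulVec, Matrix.one_mulVec, Pi.smul_apply, smul_eq_mul] at h2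
    rw [h2]
    simp [Matrix.mulVec, dotProduct]
  refine ⟨A.det.natAbs, ?_, fun j => A.det.sign * (A.adjugate.mulVec z) j, fun j => ?_⟩
  · rw [Int.abs_eq_natAbs] at hb
    omega
  · have h1 : ((A.det.natAbs : ℕ) : ℚ) = (A.det.sign : ℚ) * (A.det : ℚ) := by
      have := Int.sign_mul_self_eq_abs A.det
      rw [Int.abs_eq_natAbs] at this
      have h2 := congrArg (Int.cast : ℤ → ℚ) this
      rw [Int.cast_mul, Int.cast_natCast] at h2
      exact h2.symm
    rw [h1, mul_assoc, hcr j]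
    push_cast
    ring

lemma class_all (D : ℕ) (hD : D = 1 ∨ D = 2 ∨ D = 3) (r : Fin 5 → Fin D) : ClassOK D r := by
  rcases hD with rfl | rfl | rfl
  · exact class1 r
  · exact class2 r
  · exact class3 r

lemma ev_int (x : Cube) (h : Fin 5 → ℤ) : ev x (fun j => (h j : ℚ)) = (evz x h : ℚ) := by
  simp [ev, evz_eq]

lemma main_lemma (y : K4Row → ℤ) (hZ : y ∈ Zspan) (hC : inCone y) (hN : y ∉ Nspan) :
    y = fun _ => (1 : ℤ) := by
  obtain ⟨w, hw⟩ := hZ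
  obtain ⟨a, ha0, ha⟩ := hC
  have hwk : ∀ k, y k = ∑ x, K4Mat k x * w x := fun k => by rw [hw]; rfl
  obtain ⟨c₀, hc₀⟩ := ker_lemma (fun x => a x - w x) (fun k => by
    have h1 := ha k
    rw [hwk k] at h1
    push_cast at h1
    simp only [sub_mul, Finset.sum_sub_distrib, ← h1]
    rw [sub_eq_zero]
    exact Finset.sum_congr rfl fun x _ => mul_comm _ _)
  obtain ⟨c, hc, hsp⟩ := vertex w c₀ (fun x => by
    have h1 : a x - w x = sg x * ev x c₀ := hc₀ x
    have := ha0 x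
    linarith)
  have hsq : ∀ x, sg x * sg x = 1 := by
    intro x; unfold sg; split_ifs <;> simp
  obtain ⟨D, hD, m, hm⟩ := denom {x | (w x : ℚ) + sg x * ev x c = 0} (fun h hh => hsp h hh) c
    (fun x hx => ⟨- (sg x * w x), by
      have hx' : (w x : ℚ) + sg x * ev x c = 0 := hx
      have h2 : (sg x : ℚ) * sg x = 1 := by exact_mod_cast hsq x
      push_cast
      linear_combination (sg x : ℚ) * hx' - ev x c * h2⟩)
  have hDpos : 0 < D := by omega
  have hDz : (0 : ℤ) < D := by exact_mod_cast hDpos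
  have hDq : (0 : ℚ) < D := by exact_mod_cast hDpos
  let r : Fin 5 → Fin D := fun j => ⟨(m j % D).toNat, by
    have h1 := Int.emod_nonneg (m j) hDz.ne'
    have h2 := Int.emod_lt_of_pos (m j) hDz
    omega⟩
  have hr : ∀ j, ((r j).val : ℤ) = m j % D := fun j =>
    Int.toNat_of_nonneg (Int.emod_nonneg (m j) hDz.ne')
  have hg : ∀ x, gg D r x = (sg x * evz x m) % D := by
    intro x
    unfold gg
    apply Int.ModEq.mul_left
    rw [evz_eq, evz_eq]
    apply Int.ModEq.sum
    intro j _
    apply Int.ModEq.mul_left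
    have h1 := hr j
    change ((r j).val : ℤ) ≡ m j [ZMOD D]
    rw [h1]
    exact Int.mod_modEq _ _
  have hevm : ∀ x, (D : ℚ) * ev x c = (evz x m : ℚ) := by
    intro x
    rw [← ev_int]
    simp only [ev, Finset.mul_sum, ← hm]
    exact Finset.sum_congr rfl fun j _ => by ring
  let n : Cube → ℤ := fun x => w x + (sg x * evz x m) / D
  have hng : ∀ x, D * n x + gg D r x = D * w x + sg x * evz x m := by
    intro x
    rw [hg]
    have := Int.mul_ediv_add_emod (sg x * evz x m) D
    simp only [n]
    linear_combination this
  have hval : ∀ x, (D : ℚ) * ((w x : ℚ) + sg x * ev x c) = ((D * n x + gg D r x : ℤ) : ℚ) := by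
    intro x
    rw [hng]
    push_cast
    rw [← hevm]; ring
  have hn0 : ∀ x, 0 ≤ n x := by
    intro x
    have h1 : (0 : ℚ) ≤ ((D * n x + gg D r x : ℤ) : ℚ) := by
      rw [← hval]; exact mul_nonneg hDq.le (hc x)
    have h2 : 0 ≤ D * n x + gg D r x := by exact_mod_cast h1
    have h3 : gg D r x < D := by rw [hg]; exact Int.emod_lt_of_pos _ hDz
    by_contra hneg
    have : n x ≤ -1 := by omega
    nlinarith
  have hsumz : ∀ k, ∑ x, K4Mat k x * (sg x * evz x m) = 0 := by
    intro k
    have h1 : ∀ x, K4Mat k x * (sg x * evz x m) = ∑ j, K4Mat k x * (sg x * vv x j) * m j := by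
      intro x
      simp only [evz_eq, Finset.mul_sum]
      exact Finset.sum_congr rfl fun j _ => by ring
    simp only [h1]
    rw [Finset.sum_comm]
    simp only [← Finset.sum_mul, ker_conv, zero_mul, Finset.sum_const_zero]
  have hyk : ∀ k, D * y k = D * ∑ x, K4Mat k x * n x + ∑ x, K4Mat k x * gg D r x := by
    intro k
    have h1 : D * ∑ x, K4Mat k x * n x + ∑ x, K4Mat k x * gg D r x =
        ∑ x, K4Mat k x * (D * n x + gg D r x) := by
      rw [Finset.mul_sum, ← Finset.sum_add_distrib]
      exact Finset.sum_congr rfl fun x _ => by ring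
    rw [h1]
    simp only [hng, mul_add, Finset.sum_add_distrib, hsumz, add_zero]
    rw [hwk, Finset.mul_sum]
    exact Finset.sum_congr rfl fun x _ => by ring
  rcases class_all D hD r with ⟨h, -, hne, hh⟩ | h0 | h1 | ⟨s, hs⟩
  · exfalso
    apply hne
    have := hsp (fun j => (h j : ℚ)) (fun x hx => by
      have h1 := hval x
      rw [hx, mul_zero] at h1
      have h2 : D * n x + gg D r x = 0 := by exact_mod_cast h1.symm
      have h3 : 0 ≤ gg D r x := by rw [hg]; exact Int.emod_nonneg _ hDz.ne'
      have h4 : gg D r x = 0 := by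
        have := mul_nonneg hDz.le (hn0 x)
        omega
      rw [ev_int, hh x h4]; simp)
    funext j
    have h5 := congrFun this j
    simpa using h5
  · exfalso
    apply hN
    refine ⟨n, hn0, ?_⟩
    funext k
    have := hyk k
    rw [h0, add_zero] at this
    exact mul_left_cancel₀ hDz.ne' this
  · refine finish y n hn0 (fun k => ?_) hN
    have := hyk k
    rw [h1] at this
    apply mul_left_cancel₀ hDz.ne'
    rw [this]; ring
  · exfalso
    apply hN
    refine ⟨fun x => n x + (if sg x = sg s ∧ x ≠ s then 1 else 0), ?_, ?_⟩
    · intro x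
      exact add_nonneg (hn0 x) (by split_ifs <;> simp)
    · funext k
      have := hyk k
      rw [hs, ← two_sub s k] at this
      apply mul_left_cancel₀ hDz.ne'
      rw [this]
      simp only [Matrix.mulVec, dotProduct, mul_add, Finset.sum_add_distrib]

lemma one_mem : ((fun _ => (1 : ℤ)) : K4Row → ℤ) ∈ Zspan := by
  refine ⟨fun x => (if (Finset.univ.filter fun i => x i ≠ (0 : Cube) i).card = 1 ∨
      (Finset.univ.filter fun i => x i ≠ (0 : Cube) i).card = 4 then 1 else 0) -
      (if x = 0 then 1 else 0), ?_⟩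
  funext k
  simp only [Matrix.mulVec, dotProduct, mul_sub, Finset.sum_sub_distrib, one_add 0 k]
  simp

lemma row_sum : ∀ k, ∑ x : Cube, K4Mat k x = 4 := by decide +kernel

lemma one_cone : inCone (fun _ => (1 : ℤ)) := by
  refine ⟨fun _ => 1 / 4, fun _ => by norm_num, fun k => ?_⟩
  rw [← Finset.mul_sum]
  have : ∑ x : Cube, (K4Mat k x : ℚ) = 4 := by exact_mod_cast row_sum k
  rw [this]; norm_num

/-- Proposition 5.8: the binary hierarchical semigroup of `K₄` has
exactly one hole, the all-ones vector `𝟏` (all pair margins equal to one): `𝟏` lies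
in the normalization `ℤℬ ∩ ℝ≥0ℬ` but not in `ℕℬ`, and every other element of the
normalization lies in the semigroup. -/
theorem stmt_19 :
    ((fun _ => (1 : ℤ)) : K4Row → ℤ) ∈ Zspan ∧
    inCone (fun _ => (1 : ℤ)) ∧
    ((fun _ => (1 : ℤ)) : K4Row → ℤ) ∉ Nspan ∧
    ∀ y : K4Row → ℤ, y ∈ Zspan → inCone y → y ∉ Nspan →
      y = fun _ => (1 : ℤ) := by
  exact ⟨one_mem, one_cone, one_not, main_lemma⟩

end Stmt19
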